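/- Let R be a commutative ring, m, N, k natural numbers with k ≤ N, and U an m×m matrix over R. Let φ_U be the R-algebra endomorphism of the polynomial ring R[X_{(r,s)} : r ∈ Fin N, s ∈ Fin m] determined by X_{(r,i)} ↦ Σ_{j} U_{j,i} X_{(r,j)}. Then for any tuple (i₁,…,i_k) of elements of Fin m, φ_U(S(i₁,…,i_k)) = Σ_{j₁ < j₂ < … < j_k} det(U(j|i)) · S(j₁,…,j_k), where the sum is over strictly increasing k-tuples j from Fin m and U(j|i) is the k×k submatrix of U with rows j₁,…,j_k and columns i₁,…,i_k. -/

import Mathlib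

open scoped BigOperators

/-- The Slater operator `S(i₁,…,i_k)` in the variables `X (r, s)`, `(r, s) ∈ Fin N × Fin m`:
the determinant of the `k × k` matrix whose `(r,c)` entry is `X (r, i c)`. -/
noncomputable def slaterOp (R : Type*) [CommRing R] {N m k : ℕ} (hk : k ≤ N)
    (i : Fin k → Fin m) : MvPolynomial (Fin N × Fin m) R :=
  (Matrix.of fun r c : Fin k => MvPolynomial.X (Fin.castLE hk r, i c)).det

/-- The algebra endomorphism `φ_U` determined by `X (r, i) ↦ Σ_j U_{j,i} X (r, j)`. -/
noncomputable def phiU {R : Type*} [CommRing R] {N m : ℕ} (U : Matrix (Fin m) (Fin m) R) :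
    MvPolynomial (Fin N × Fin m) R →ₐ[R] MvPolynomial (Fin N × Fin m) R :=
  MvPolynomial.aeval fun v : Fin N × Fin m =>
    ∑ j : Fin m, MvPolynomial.C (U j v.2) * MvPolynomial.X (v.1, j)

/-!
Applying `φ_U` to each entry of the matrix `X` of indeterminates gives `X U`, so `φ_U(S(i))` is the
determinant of the first `k` rows of `X` times the columns `i` of `U`, and the Cauchy–Binet formula
expands it. That formula holds for every alternating map `g` of `k` arguments, the determinant being
one: expanding `g` at `k` linear combinations of vectors `v_s` by multilinearity gives a sum over
all `k`-tuples of indices. The tuples with a repetition contribute zero, every other one is uniquely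
`j ∘ σ` with `j` strictly increasing and `σ` a permutation, and summing the signs over `σ` assembles
the minor with rows `j` of the coefficient matrix.
-/

section IncreasingTuples

variable {k : ℕ} {α : Type*} [LinearOrder α]

theorem sort_strictMono_comp_perm {j : Fin k → α} (hj : StrictMono j) (σ : Equiv.Perm (Fin k)) :
    Tuple.sort (j ∘ σ) = σ⁻¹ := by
  refine (Tuple.eq_sort_iff.2 ⟨?_, fun a b hab h => ?_⟩).symm
  · simpa [Function.comp_def] using hj.monotone
  · exact absurd ((hj.injective.comp σ.injective).comp σ⁻¹.injective h) hab.ne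

theorem strictMono_comp_sort {f : Fin k → α} (hf : Function.Injective f) :
    StrictMono (f ∘ Tuple.sort f) :=
  (Tuple.monotone_sort f).strictMono_of_injective (hf.comp (Tuple.sort f).injective)

theorem sum_injective_eq_sum_strictMono_sum_perm [Fintype α]
    [DecidablePred (StrictMono : (Fin k → α) → Prop)] {M : Type*} [AddCommMonoid M]
    (F : (Fin k → α) → M) :
    ∑ f with Function.Injective f, F f =
      ∑ j with StrictMono j, ∑ σ : Equiv.Perm (Fin k), F (j ∘ σ) := by
  rw [← Finset.sum_product']
  refine Finset.sum_bij' (fun f _ => (f ∘ Tuple.sort f, (Tuple.sort f)⁻¹))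
    (fun p _ => p.1 ∘ p.2) ?_ ?_ ?_ ?_ ?_
  · intro f hf
    simpa using strictMono_comp_sort (by simpa using hf)
  · rintro ⟨j, σ⟩ h
    have hj : StrictMono j := by simpa using h
    simpa using hj.injective
  · intro f _
    ext c
    simp
  · rintro ⟨j, σ⟩ h
    have hj : StrictMono j := by simpa using h
    ext c <;> simp [sort_strictMono_comp_perm hj]
  · intro f _
    congr 1
    ext c
    simp

end IncreasingTuples

section CauchyBinet

theorem multilinearMap_sum_smul {R N n p : Type*} {M : n → Type*} [CommSemiring R]
    [∀ c, AddCommMonoid (M c)] [∀ c, Module R (M c)] [AddCommMonoid N] [Module R N]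
    [Fintype n] [DecidableEq n] [Fintype p]
    (g : MultilinearMap R M N) (B : Matrix p n R) (v : ∀ c, p → M c) :
    g (fun c => ∑ s, B s c • v c s) =
      ∑ f : n → p, (∏ c, B (f c) c) • g (fun c => v c (f c)) := by
  rw [g.map_sum]
  exact Finset.sum_congr rfl fun f _ => g.map_smul_univ (fun c => B (f c) c) fun c => v c (f c)

variable {R : Type*} [CommRing R]

section AlternatingMap

variable {M N : Type*} [AddCommMonoid M] [Module R M] [AddCommGroup N] [Module R N]

theorem sum_perm_prod_smul_alternatingMap {n : Type*} [Fintype n] [DecidableEq n]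
    (g : M [⋀^n]→ₗ[R] N) (B : Matrix n n R) (w : n → M) :
    ∑ σ : Equiv.Perm n, (∏ c, B (σ c) c) • g (w ∘ σ) = B.det • g w := by
  rw [Matrix.det_apply, Finset.sum_smul]
  refine Finset.sum_congr rfl fun σ _ => ?_
  rw [g.map_perm, smul_comm, smul_assoc]

theorem alternatingMap_sum_smul_eq_sum_strictMono {k : ℕ} {p : Type*} [Fintype p]
    [LinearOrder p] [DecidablePred (StrictMono : (Fin k → p) → Prop)] (g : M [⋀^Fin k]→ₗ[R] N)
    (B : Matrix p (Fin k) R) (v : p → M) :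
    g (fun c => ∑ s, B s c • v s) =
      ∑ j with StrictMono j, (B.submatrix j id).det • g (v ∘ j) := by
  have repeated_index (f : Fin k → p) (hf : ¬ Function.Injective f) : g (v ∘ f) = 0 :=
    g.map_eq_zero_of_not_injective _ fun h => hf h.of_comp
  calc g (fun c => ∑ s, B s c • v s)
      = ∑ f : Fin k → p, (∏ c, B (f c) c) • g (v ∘ f) :=
      multilinearMap_sum_smul g.toMultilinearMap B fun _ => v
    _ = ∑ f with Function.Injective f, (∏ c, B (f c) c) • g (v ∘ f) := by
      refine (Finset.sum_filter_of_ne fun f _ hne => ?_).symm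
      by_contra hf
      exact hne (by rw [repeated_index f hf, smul_zero])
    _ = ∑ j with StrictMono j, ∑ σ : Equiv.Perm (Fin k),
          (∏ c, B (j (σ c)) c) • g ((v ∘ j) ∘ σ) :=
      sum_injective_eq_sum_strictMono_sum_perm _
    _ = ∑ j with StrictMono j, (B.submatrix j id).det • g (v ∘ j) :=
      Finset.sum_congr rfl fun j _ =>
        sum_perm_prod_smul_alternatingMap g (B.submatrix j id) (v ∘ j)

end AlternatingMap

theorem det_mul_eq_sum_strictMono {k : ℕ} {p : Type*} [Fintype p] [LinearOrder p]
    [DecidablePred (StrictMono : (Fin k → p) → Prop)]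
    (A : Matrix (Fin k) p R) (B : Matrix p (Fin k) R) :
    (A * B).det =
      ∑ j with StrictMono j, (B.submatrix j id).det * (A.submatrix id j).det := by
  have columns : (A * B).transpose = fun c => ∑ s, B s c • A.transpose s := by
    ext c r
    simp [Matrix.mul_apply, mul_comm]
  rw [← Matrix.det_transpose, columns]
  refine (alternatingMap_sum_smul_eq_sum_strictMono Matrix.detRowAlternating B A.transpose).trans ?_
  refine Finset.sum_congr rfl fun j _ => ?_
  rw [smul_eq_mul, ← Matrix.det_transpose (A.submatrix id j), Matrix.transpose_submatrix]
  rfl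

end CauchyBinet

section Slater

open Matrix

variable {R : Type*} [CommRing R] {N m k : ℕ}

theorem slaterOp_eq_det_submatrix (hk : k ≤ N) (i : Fin k → Fin m) :
    slaterOp R hk i = ((mvPolynomialX (Fin N) (Fin m) R).submatrix (Fin.castLE hk) i).det :=
  rfl

theorem mvPolynomialX_map_phiU (U : Matrix (Fin m) (Fin m) R) :
    (mvPolynomialX (Fin N) (Fin m) R).map (phiU U) =
      mvPolynomialX (Fin N) (Fin m) R * U.map (MvPolynomial.C (σ := Fin N × Fin m)) := by
  ext1 r s
  simp [phiU, mul_apply, mul_comm (MvPolynomial.C _)]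

theorem phiU_slaterOp_eq_det_mul (hk : k ≤ N) (U : Matrix (Fin m) (Fin m) R)
    (i : Fin k → Fin m) :
    phiU U (slaterOp R hk i) =
      ((mvPolynomialX (Fin N) (Fin m) R).submatrix (Fin.castLE hk) id *
        (U.map (MvPolynomial.C (σ := Fin N × Fin m))).submatrix id i).det := by
  rw [slaterOp_eq_det_submatrix, AlgHom.map_det, AlgHom.mapMatrix_apply, ← submatrix_map,
    mvPolynomialX_map_phiU, submatrix_mul _ _ _ id _ Function.bijective_id]

end Slater

open Classical in
/-- The action of a visible unitary on a Slater operator: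
`φ_U(S(i)) = Σ_{j₁<⋯<j_k} det(U(j|i)) · S(j)`. -/
theorem stmt7 {R : Type*} [CommRing R] {N m k : ℕ} (hk : k ≤ N)
    (U : Matrix (Fin m) (Fin m) R) (i : Fin k → Fin m) :
    phiU (N := N) U (slaterOp R hk i) =
      ∑ j ∈ Finset.univ.filter (fun j : Fin k → Fin m => StrictMono j),
        MvPolynomial.C (U.submatrix j i).det * slaterOp R hk j := by
  rw [phiU_slaterOp_eq_det_mul, det_mul_eq_sum_strictMono]
  refine Finset.sum_congr rfl fun j _ => ?_
  rw [RingHom.map_det, slaterOp_eq_det_submatrix, RingHom.mapMatrix_apply, ← Matrix.submatrix_map]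
  rfl
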